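/- arXiv:1803.00413 — 2 statements merged into one kernel-verified Lean document; each statement's English description precedes it below -/
import Mathlib

section
/- Let n ≥ 1, let G be a group, and let x : ZMod n → G be a family of elements indexed cyclically such that for every index k there exists an index j with either x(k+1) = x(j) · x(k) · x(j)^{-1} or x(k+1) = x(j)^{-1} · x(k) · x(j) (Wirtinger-type relations). Then there exist indices i, j such that x(i) · x(j) ≠ x(j) · x(i) if and only if there exist indices i ≠ j with x(i) ≠ x(j). Equivalently: the subgroup of G generated by the image of x is commutative if and only if x is constant. -/
/-!
A Wirtinger relation makes neighbouring members of the family conjugate inside the subgroup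
generated by the family, so all members lie in a single conjugacy class of that subgroup.
If the members commute, that subgroup is commutative and its conjugacy classes are singletons.
-/

theorem apply_eq_of_periodic_of_mem_zmultiples {A α : Type*} [AddGroup A] {f : A → α} {a b c : A}
    (hf : Function.Periodic f c) (ha : a ∈ AddSubgroup.zmultiples c)
    (hb : b ∈ AddSubgroup.zmultiples c) : f a = f b := by
  obtain ⟨p, rfl⟩ := ha
  obtain ⟨q, rfl⟩ := hb
  exact (hf.zsmul_eq p).trans (hf.zsmul_eq q).symm

section ConjugateFamily

variable {ι A G : Type*} [Group G]

/-- The family `x`, with values in the subgroup it generates rather than in `G`, so that `IsConj`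
between its members means conjugacy by an element of that subgroup. -/
def toClosureRange (x : ι → G) (i : ι) : Subgroup.closure (Set.range x) :=
  ⟨x i, Subgroup.subset_closure (Set.mem_range_self i)⟩

open scoped IsMulCommutative in
theorem eq_of_isConj_toClosureRange {x : ι → G} (hcomm : ∀ i j, x i * x j = x j * x i) {i j : ι}
    (hconj : IsConj (toClosureRange x i) (toClosureRange x j)) : x i = x j := by
  have : IsMulCommutative (Subgroup.closure (Set.range x)) :=
    Subgroup.isMulCommutative_closure <| by
      rintro _ ⟨k, rfl⟩ _ ⟨l, rfl⟩
      exact hcomm k l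
  have heq : toClosureRange x i = toClosureRange x j := isConj_iff_eq.mp hconj
  exact congrArg Subtype.val heq

theorem isConj_toClosureRange_of_eq_conj {x : ι → G} {j k l : ι}
    (h : x l = x j * x k * (x j)⁻¹ ∨ x l = (x j)⁻¹ * x k * x j) :
    IsConj (toClosureRange x k) (toClosureRange x l) := by
  rcases h with h | h
  · exact isConj_iff.mpr ⟨toClosureRange x j, Subtype.ext h.symm⟩
  · refine isConj_iff.mpr ⟨(toClosureRange x j)⁻¹, ?_⟩
    rw [inv_inv]
    exact Subtype.ext h.symm

theorem isConj_toClosureRange_of_wirtinger [AddGroup A] {c : A}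
    (hc : ∀ a, a ∈ AddSubgroup.zmultiples c) {x : A → G}
    (hx : ∀ k, ∃ j, x (k + c) = x j * x k * (x j)⁻¹ ∨ x (k + c) = (x j)⁻¹ * x k * x j) (a b : A) :
    IsConj (toClosureRange x a) (toClosureRange x b) := by
  have hperiodic : Function.Periodic (fun k ↦ ConjClasses.mk (toClosureRange x k)) c := by
    intro k
    obtain ⟨_, hj⟩ := hx k
    exact ConjClasses.mk_eq_mk_iff_isConj.mpr (isConj_toClosureRange_of_eq_conj hj).symm
  have hclass := apply_eq_of_periodic_of_mem_zmultiples hperiodic (hc a) (hc b)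
  exact ConjClasses.mk_eq_mk_iff_isConj.mp hclass

theorem wirtinger_noncommutative_iff_nonconstant_general (x : ι → G)
    (hconj : ∀ i j, IsConj (toClosureRange x i) (toClosureRange x j)) :
    (∃ i j, x i * x j ≠ x j * x i) ↔ ∃ i j, i ≠ j ∧ x i ≠ x j := by
  constructor
  · rintro ⟨i, j, hij⟩
    have hne : x i ≠ x j := fun h ↦ hij (by rw [h])
    exact ⟨i, j, ne_of_apply_ne x hne, hne⟩
  · rintro ⟨i, j, -, hne⟩
    by_contra! hcomm
    exact hne (eq_of_isConj_toClosureRange hcomm (hconj i j))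

end ConjugateFamily

/-- Let `G` be a group and `x : ZMod n → G` (`n ≥ 1`) a cyclically indexed family such that
each `x (k+1)` is conjugate to `x k` by some `x j` or its inverse (Wirtinger-type relations).
Then some pair of the `x i` fails to commute if and only if the family is non-constant,
i.e. `x i ≠ x j` for some `i ≠ j`. -/
theorem wirtinger_noncommutative_iff_nonconstant
    (n : ℕ) [NeZero n] {G : Type*} [Group G] (x : ZMod n → G)
    (hx : ∀ k : ZMod n, ∃ j : ZMod n,
      x (k + 1) = x j * x k * (x j)⁻¹ ∨ x (k + 1) = (x j)⁻¹ * x k * x j) :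
    (∃ i j : ZMod n, x i * x j ≠ x j * x i) ↔ ∃ i j : ZMod n, i ≠ j ∧ x i ≠ x j :=
  wirtinger_noncommutative_iff_nonconstant_general x <|
    isConj_toClosureRange_of_wirtinger
      (ZMod.intCast_surjective.forall.mpr AddSubgroup.intCast_mem_zmultiples_one) hx
end

section
/- Let n ≥ 1, let σ : ZMod n → {+, −} and j : ZMod n → ZMod n be arbitrary (encoding an abstract Wirtinger-type relation system), and consider the system of constraints over real variables a_k, b_k, c_k, d_k for k ∈ ZMod n: (i) a_k^2 + b_k^2 + c_k^2 + d_k^2 = 1 for all k; (ii) for all k, with M_k := [[a_k + b_k·i, c_k + d_k·i], [−c_k + d_k·i, a_k − b_k·i]], the matrix relation M_{k+1}·M_{j(k)} − M_{j(k)}·M_k = 0 holds if σ(k) = +, and M_k·M_{j(k)} − M_{j(k)}·M_{k+1} = 0 holds if σ(k) = −; (iii) \sum_{k}((a_k − a_1)^2 + (b_k − b_1)^2 + (c_k − c_1)^2 + (d_k − d_1)^2) ≠ 0. Then this system has a real solution if and only if there exists a family x : ZMod n → SU(2) satisfying x(k+1) = x(j(k))·x(k)·x(j(k))^{-1} when σ(k)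 = + and x(k+1) = x(j(k))^{-1}·x(k)·x(j(k)) when σ(k) = −, such that the x(k) generate a non-commutative subgroup of SU(2). -/
/-- The 2×2 complex matrix `[[a + b·i, c + d·i], [−c + d·i, a − b·i]]` parametrized by
four real numbers. -/
def wirtingerMatrix (a b c d : ℝ) : Matrix (Fin 2) (Fin 2) ℂ :=
  !![(a : ℂ) + b * Complex.I, (c : ℂ) + d * Complex.I;
     -(c : ℂ) + d * Complex.I, (a : ℂ) - b * Complex.I]

/-!
A matrix is special unitary exactly when its conjugate transpose is its adjugate and its
determinant is one. For `2 × 2` complex matrices the first condition is linear over `ℝ` and cuts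
out the matrices `wirtingerMatrix a b c d`, a copy of the quaternions; the second becomes
`a² + b² + c² + d² = 1`. So real solutions of the unit-norm equations are the same thing as points
of `SU(2)`.

If the members of a Wirtinger family commute, then each relation reads `x (k + 1) = x k`, and the
family is constant because the relations run once around the whole cycle. A constant family
generates a commutative subgroup, so the generated subgroup is non-commutative exactly when the
sum of squares is nonzero.
-/

section WirtingerFamily

variable {G : Type*} [Group G] {n : ℕ}

/-- The Wirtinger relations for a family `x` of group elements: `x (k + 1)` is the conjugate of
`x k` by `x (j k)` or by its inverse, according to the sign `σ k` (`true` is `+`). Such families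
are the homomorphisms to `G` from the group presented by these relations. -/
def IsWirtingerFamily (σ : ZMod n → Bool) (j : ZMod n → ZMod n) (x : ZMod n → G) : Prop :=
  ∀ k, if σ k then x (k + 1) = x (j k) * x k * (x (j k))⁻¹
    else x (k + 1) = (x (j k))⁻¹ * x k * x (j k)

theorem eq_of_periodic_one {α : Type*} {f : ZMod n → α} (hf : Function.Periodic f 1)
    (k l : ZMod n) : f k = f l := by
  have eq_zero (m : ZMod n) : f m = f 0 := by
    obtain ⟨z, rfl⟩ := ZMod.intCast_surjective m
    simpa only [mul_one] using hf.int_mul_eq z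
  rw [eq_zero k, eq_zero l]

variable {σ : ZMod n → Bool} {j : ZMod n → ZMod n}

theorem IsWirtingerFamily.periodic_of_commute {x : ZMod n → G} (hx : IsWirtingerFamily σ j x)
    (hcomm : ∀ k l, Commute (x k) (x l)) : Function.Periodic x 1 := by
  intro k
  have relation := hx k
  split_ifs at relation
  · rw [relation, (hcomm (j k) k).mul_inv_cancel]
  · rw [relation, (hcomm (j k) k).inv_mul_cancel]

theorem IsWirtingerFamily.forall_closure_range_mul_comm_iff {x : ZMod n → G}
    (hx : IsWirtingerFamily σ j x) (i : ZMod n) :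
    (∀ g ∈ Subgroup.closure (Set.range x), ∀ h ∈ Subgroup.closure (Set.range x),
      g * h = h * g) ↔ ∀ k, x k = x i := by
  constructor
  · intro hcomm k
    have mem_closure (l) : x l ∈ Subgroup.closure (Set.range x) :=
      Subgroup.subset_closure (Set.mem_range_self l)
    exact eq_of_periodic_one
      (hx.periodic_of_commute fun l m => hcomm _ (mem_closure l) _ (mem_closure m)) k i
  · intro hconst
    have := Subgroup.isMulCommutative_closure (k := Set.range x) <| by
      rintro _ ⟨k, rfl⟩ _ ⟨l, rfl⟩
      rw [hconst k, hconst l]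
    exact fun g hg h hh => setLike_mul_comm hg hh

theorem isWirtingerFamily_unitary_iff {R : Type*} [Ring R] [StarRing R]
    {x : ZMod n → unitary R} :
    IsWirtingerFamily σ j x ↔
      ∀ k, if σ k then (x (k + 1) : R) * x (j k) - x (j k) * x k = 0
        else (x k : R) * x (j k) - x (j k) * x (k + 1) = 0 := by
  refine forall_congr' fun k => ?_
  split_ifs
  · rw [eq_mul_inv_iff_mul_eq, sub_eq_zero]
    norm_cast
  · rw [mul_assoc, eq_inv_mul_iff_mul_eq, eq_comm, sub_eq_zero]
    norm_cast

end WirtingerFamily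

theorem mem_specialUnitaryGroup_iff_star_eq_adjugate {m R : Type*} [Fintype m] [DecidableEq m]
    [CommRing R] [StarRing R] {A : Matrix m m R} :
    A ∈ Matrix.specialUnitaryGroup m R ↔ star A = A.adjugate ∧ A.det = 1 := by
  rw [Matrix.mem_specialUnitaryGroup_iff, Matrix.mem_unitaryGroup_iff]
  refine and_congr_left fun hdet => ⟨fun hA => ?_, fun hA => ?_⟩
  · have adjugate_mul : A.adjugate * A = 1 := by rw [Matrix.adjugate_mul, hdet, one_smul]
    exact (left_inv_eq_right_inv adjugate_mul hA).symm
  · rw [hA, Matrix.mul_adjugate, hdet, one_smul]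

theorem star_eq_adjugate_iff_exists_wirtingerMatrix {A : Matrix (Fin 2) (Fin 2) ℂ} :
    star A = A.adjugate ↔ ∃ a b c d : ℝ, wirtingerMatrix a b c d = A := by
  constructor
  · intro hA
    rw [Matrix.adjugate_fin_two] at hA
    have diagonal : star (A 0 0) = A 1 1 := congrFun₂ hA 0 0
    have antidiagonal : star (A 0 1) = -A 1 0 := congrFun₂ hA 1 0
    refine ⟨(A 0 0).re, (A 0 0).im, (A 0 1).re, (A 0 1).im, ?_⟩
    rw [A.eta_fin_two, ← diagonal, ← neg_eq_iff_eq_neg.2 antidiagonal]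
    ext i k
    fin_cases i <;> fin_cases k <;> simp [wirtingerMatrix, Complex.ext_iff]
  · rintro ⟨a, b, c, d, rfl⟩
    rw [wirtingerMatrix, Matrix.adjugate_fin_two_of]
    ext i k
    fin_cases i <;> fin_cases k <;> simp [Complex.ext_iff]

theorem det_wirtingerMatrix (a b c d : ℝ) :
    (wirtingerMatrix a b c d).det = ((a ^ 2 + b ^ 2 + c ^ 2 + d ^ 2 : ℝ) : ℂ) := by
  rw [wirtingerMatrix, Matrix.det_fin_two_of]
  push_cast
  linear_combination (-(b : ℂ) ^ 2 - (d : ℂ) ^ 2) * Complex.I_sq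

theorem mem_specialUnitaryGroup_iff_exists_wirtingerMatrix {A : Matrix (Fin 2) (Fin 2) ℂ} :
    A ∈ Matrix.specialUnitaryGroup (Fin 2) ℂ ↔
      ∃ a b c d : ℝ, a ^ 2 + b ^ 2 + c ^ 2 + d ^ 2 = 1 ∧ wirtingerMatrix a b c d = A := by
  rw [mem_specialUnitaryGroup_iff_star_eq_adjugate, star_eq_adjugate_iff_exists_wirtingerMatrix]
  constructor
  · rintro ⟨⟨a, b, c, d, rfl⟩, hdet⟩
    rw [det_wirtingerMatrix] at hdet
    exact ⟨a, b, c, d, by exact_mod_cast hdet, rfl⟩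
  · rintro ⟨a, b, c, d, hnorm, rfl⟩
    exact ⟨⟨a, b, c, d, rfl⟩, by rw [det_wirtingerMatrix, hnorm, Complex.ofReal_one]⟩

theorem wirtingerMatrix_inj {a b c d a' b' c' d' : ℝ} :
    wirtingerMatrix a b c d = wirtingerMatrix a' b' c' d' ↔
      a = a' ∧ b = b' ∧ c = c' ∧ d = d' := by
  constructor
  · intro h
    have diagonal : (a : ℂ) + b * Complex.I = a' + b' * Complex.I := congrFun₂ h 0 0
    have antidiagonal : (c : ℂ) + d * Complex.I = c' + d' * Complex.I := congrFun₂ h 0 1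
    simp only [← Complex.mk_eq_add_mul_I, Complex.mk.injEq] at diagonal antidiagonal
    exact ⟨diagonal.1, diagonal.2, antidiagonal.1, antidiagonal.2⟩
  · rintro ⟨rfl, rfl, rfl, rfl⟩
    rfl

theorem sum_sq_sub_eq_zero_iff_wirtingerMatrix_eq {ι : Type*} [Fintype ι] (a b c d : ι → ℝ)
    (i : ι) :
    ∑ k, ((a k - a i) ^ 2 + (b k - b i) ^ 2 + (c k - c i) ^ 2 + (d k - d i) ^ 2) = 0 ↔
      ∀ k, wirtingerMatrix (a k) (b k) (c k) (d k) =
        wirtingerMatrix (a i) (b i) (c i) (d i) := by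
  rw [Fintype.sum_eq_zero_iff_of_nonneg fun k => by positivity, funext_iff]
  refine forall_congr' fun k => ?_
  rw [wirtingerMatrix_inj, Pi.zero_apply, add_eq_zero_iff_of_nonneg (by positivity) (by positivity),
    add_eq_zero_iff_of_nonneg (by positivity) (by positivity),
    add_eq_zero_iff_of_nonneg (by positivity) (by positivity)]
  simp only [sq_eq_zero_iff, sub_eq_zero, and_assoc]

/-- **Correctness of the Unknot-QE polynomial system.**
Fix `n ≥ 1`, a sign assignment `σ : ZMod n → Bool` (`true` = `+`, `false` = `−`) and an
index map `j : ZMod n → ZMod n`, encoding an abstract Wirtinger-type relation system.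
The real polynomial system in variables `a k, b k, c k, d k` (`k : ZMod n`) consisting of
(i) the unit-norm equations `a k² + b k² + c k² + d k² = 1`,
(ii) the matrix relations `M (k+1)·M (j k) − M (j k)·M k = 0` (sign `+`) resp.
`M k·M (j k) − M (j k)·M (k+1) = 0` (sign `−`) for
`M k := [[a k + b k·i, c k + d k·i], [−c k + d k·i, a k − b k·i]]`, and
(iii) the non-constancy inequality
`∑ k, ((a k − a 1)² + (b k − b 1)² + (c k − c 1)² + (d k − d 1)²) ≠ 0`,
has a real solution if and only if there is a family `x : ZMod n → SU(2)` satisfying the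
Wirtinger relations `x (k+1) = x (j k) · x k · (x (j k))⁻¹` (sign `+`) resp.
`x (k+1) = (x (j k))⁻¹ · x k · x (j k)` (sign `−`), whose members generate a
non-commutative subgroup. -/
theorem unknotQE_system_solvable_iff_noncommutative_su2_rep
    (n : ℕ) [NeZero n] (σ : ZMod n → Bool) (j : ZMod n → ZMod n) :
    (∃ a b c d : ZMod n → ℝ,
      (∀ k : ZMod n, a k ^ 2 + b k ^ 2 + c k ^ 2 + d k ^ 2 = 1) ∧
      (∀ k : ZMod n,
        if σ k then
          wirtingerMatrix (a (k + 1)) (b (k + 1)) (c (k + 1)) (d (k + 1)) *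
              wirtingerMatrix (a (j k)) (b (j k)) (c (j k)) (d (j k)) -
            wirtingerMatrix (a (j k)) (b (j k)) (c (j k)) (d (j k)) *
              wirtingerMatrix (a k) (b k) (c k) (d k) = 0
        else
          wirtingerMatrix (a k) (b k) (c k) (d k) *
              wirtingerMatrix (a (j k)) (b (j k)) (c (j k)) (d (j k)) -
            wirtingerMatrix (a (j k)) (b (j k)) (c (j k)) (d (j k)) *
              wirtingerMatrix (a (k + 1)) (b (k + 1)) (c (k + 1)) (d (k + 1)) = 0) ∧
      ∑ k : ZMod n,
          ((a k - a 1) ^ 2 + (b k - b 1) ^ 2 + (c k - c 1) ^ 2 + (d k - d 1) ^ 2) ≠ 0)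
    ↔
    (∃ x : ZMod n → Matrix.unitaryGroup (Fin 2) ℂ,
      (∀ k : ZMod n,
        (x k : Matrix (Fin 2) (Fin 2) ℂ) ∈ Matrix.specialUnitaryGroup (Fin 2) ℂ) ∧
      (∀ k : ZMod n,
        if σ k then x (k + 1) = x (j k) * x k * (x (j k))⁻¹
        else x (k + 1) = (x (j k))⁻¹ * x k * x (j k)) ∧
      ¬ ∀ g ∈ Subgroup.closure (Set.range x),
          ∀ h ∈ Subgroup.closure (Set.range x), g * h = h * g) := by
  constructor
  · rintro ⟨a, b, c, d, hnorm, hrel, hne⟩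
    have hSU (k) : wirtingerMatrix (a k) (b k) (c k) (d k) ∈
        Matrix.specialUnitaryGroup (Fin 2) ℂ :=
      mem_specialUnitaryGroup_iff_exists_wirtingerMatrix.2 ⟨_, _, _, _, hnorm k, rfl⟩
    let x (k : ZMod n) : Matrix.unitaryGroup (Fin 2) ℂ :=
      ⟨_, Matrix.specialUnitaryGroup_le_unitaryGroup (hSU k)⟩
    have hx : IsWirtingerFamily σ j x := isWirtingerFamily_unitary_iff.2 hrel
    refine ⟨x, hSU, hx, ?_⟩
    rw [hx.forall_closure_range_mul_comm_iff 1]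
    simpa only [Ne, sum_sq_sub_eq_zero_iff_wirtingerMatrix_eq, x, Subtype.mk.injEq] using hne
  · rintro ⟨x, hSU, (hx : IsWirtingerFamily σ j x), hne⟩
    choose a b c d hnorm hW using
      fun k => mem_specialUnitaryGroup_iff_exists_wirtingerMatrix.1 (hSU k)
    refine ⟨a, b, c, d, hnorm, ?_, ?_⟩
    · simpa only [hW] using isWirtingerFamily_unitary_iff.1 hx
    · rw [hx.forall_closure_range_mul_comm_iff 1] at hne
      simpa only [Ne, sum_sq_sub_eq_zero_iff_wirtingerMatrix_eq, hW, Subtype.ext_iff] using hne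
end
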